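/- Let (A, μ, α, β) be a BiHom-associative algebra with α, β bijective, and let ψ, ω : A → A be linear maps with ψ(ab) = ψ(a)ψ(b) and ω(ab) = ω(a)ω(b) such that any two of α, β, ψ, ω commute. Let r, s ∈ A⊗A be α-, β-, ψ-, and ω-invariant, and define δ_r(a) = α⁻¹(a)▷r − r◁β⁻¹(a), δ_s(a) = α⁻¹(a)▷s − s◁β⁻¹(a), and Δ(a) = α⁻¹(a)▷r − s◁β⁻¹(a). Then (A, μ, δ_r, δ_s, Δ, α, β, ψ, ω) is a covariant BiHom-bialgebra if and only if ωα⁻¹(a)▷(r₁₃r₁₂ − r₁₂r₂₃ + s₂₃r₁₃) = (s₁₃r₁₂ − s₁₂s₂₃ + s₂₃s₁₃)◁ψβ⁻¹(a) for all a ∈ A. -/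

import Mathlib

open TensorProduct

section Defs

variable {K A : Type*} [Field K] [NonUnitalNonAssocRing A] [Module K A]
  [SMulCommClass K A A] [IsScalarTower K A A]

/-- The left action of `A` on `A⊗A`: `a ▷ (x⊗y) = ω(a)x ⊗ β(y)`. -/
noncomputable def lT2 (β ω : A →ₗ[K] A) (a : A) : A ⊗[K] A →ₗ[K] A ⊗[K] A :=
  TensorProduct.map (LinearMap.mulLeft K (ω a)) β

/-- The right action of `A` on `A⊗A`: `(x⊗y) ◁ a = α(x) ⊗ yψ(a)`. -/
noncomputable def rT2 (α ψ : A →ₗ[K] A) (a : A) : A ⊗[K] A →ₗ[K] A ⊗[K] A :=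
  TensorProduct.map α (LinearMap.mulRight K (ψ a))

/-- The left action of `A` on `A⊗A⊗A`: `a ▷ (x⊗y⊗z) = ω(a)x ⊗ β(y) ⊗ β(z)`. -/
noncomputable def lT3 (β ω : A →ₗ[K] A) (a : A) :
    A ⊗[K] (A ⊗[K] A) →ₗ[K] A ⊗[K] (A ⊗[K] A) :=
  TensorProduct.map (LinearMap.mulLeft K (ω a)) (TensorProduct.map β β)

/-- The right action of `A` on `A⊗A⊗A`: `(x⊗y⊗z) ◁ a = α(x) ⊗ α(y) ⊗ zψ(a)`. -/
noncomputable def rT3 (α ψ : A →ₗ[K] A) (a : A) :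
    A ⊗[K] (A ⊗[K] A) →ₗ[K] A ⊗[K] (A ⊗[K] A) :=
  TensorProduct.map α (TensorProduct.map α (LinearMap.mulRight K (ψ a)))

/-- The left action, bundled as a linear map in the acting variable. -/
noncomputable def lT2hom (β ω : A →ₗ[K] A) : A →ₗ[K] (A ⊗[K] A →ₗ[K] A ⊗[K] A) :=
  TensorProduct.homTensorHomMap (RingHom.id K) A A A A ∘ₗ
    (TensorProduct.mk K (A →ₗ[K] A) (A →ₗ[K] A)).flip β ∘ₗ LinearMap.mul K A ∘ₗ ω

/-- The right action, bundled as a linear map in the acting variable. -/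
noncomputable def rT2hom (α ψ : A →ₗ[K] A) : A →ₗ[K] (A ⊗[K] A →ₗ[K] A ⊗[K] A) :=
  TensorProduct.homTensorHomMap (RingHom.id K) A A A A ∘ₗ
    TensorProduct.mk K (A →ₗ[K] A) (A →ₗ[K] A) α ∘ₗ (LinearMap.mul K A).flip ∘ₗ ψ

/-- `a ↦ α⁻¹(a) ▷ r − s ◁ β⁻¹(a)`, as a linear map `A → A⊗A`. -/
noncomputable def deltaOp (α β : A ≃ₗ[K] A) (ψ ω : A →ₗ[K] A) (r s : A ⊗[K] A) :
    A →ₗ[K] A ⊗[K] A :=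
  (lT2hom β.toLinearMap ω).flip r ∘ₗ α.symm.toLinearMap -
    (rT2hom α.toLinearMap ψ).flip s ∘ₗ β.symm.toLinearMap

/-- `r₁₂s₂₃ = α(r¹) ⊗ r²s¹ ⊗ β(s²)`, as a linear map on `(A⊗A)⊗(A⊗A)`. -/
noncomputable def m1223 (α β : A →ₗ[K] A) :
    (A ⊗[K] A) ⊗[K] (A ⊗[K] A) →ₗ[K] A ⊗[K] (A ⊗[K] A) :=
  TensorProduct.map α (TensorProduct.map (LinearMap.mul' K A) β) ∘ₗ
    TensorProduct.map LinearMap.id (TensorProduct.assoc K A A A).symm.toLinearMap ∘ₗ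
    (TensorProduct.assoc K A A (A ⊗[K] A)).toLinearMap

/-- `r₁₃s₁₂ = ω(r¹)s¹ ⊗ β(s²) ⊗ αψ(r²)`. -/
noncomputable def m1312 (α β ψ ω : A →ₗ[K] A) :
    (A ⊗[K] A) ⊗[K] (A ⊗[K] A) →ₗ[K] A ⊗[K] (A ⊗[K] A) :=
  TensorProduct.map (LinearMap.mul' K A ∘ₗ TensorProduct.map ω LinearMap.id)
      ((TensorProduct.comm K A A).toLinearMap ∘ₗ TensorProduct.map (α ∘ₗ ψ) β) ∘ₗ
    (TensorProduct.tensorTensorTensorComm K A A A A).toLinearMap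

/-- `r₂₃s₁₃ = βω(s¹) ⊗ α(r¹) ⊗ r²ψ(s²)`. -/
noncomputable def m2313 (α β ψ ω : A →ₗ[K] A) :
    (A ⊗[K] A) ⊗[K] (A ⊗[K] A) →ₗ[K] A ⊗[K] (A ⊗[K] A) :=
  (TensorProduct.assoc K A A A).toLinearMap ∘ₗ
    TensorProduct.map ((TensorProduct.comm K A A).toLinearMap ∘ₗ TensorProduct.map α (β ∘ₗ ω))
      (LinearMap.mul' K A ∘ₗ TensorProduct.map LinearMap.id ψ) ∘ₗ
    (TensorProduct.tensorTensorTensorComm K A A A A).toLinearMap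

end Defs

/-- The coalgebra-side axioms of a covariant BiHom-bialgebra
`(A, μ, δ₁, δ₂, Δ, α, β, ψ, ω)`: `Δ` is compatible with `α, β, ψ, ω` and
BiHom-coassociative, `δ₁, δ₂` are BiHom-derivations, and `Δ` is a covariant
BiHom-derivation with respect to `(δ₁, δ₂)`. -/
noncomputable def IsCovariantBiHomBialgebra {K A : Type*} [Field K]
    [NonUnitalNonAssocRing A] [Module K A] [SMulCommClass K A A] [IsScalarTower K A A]
    (α β ψ ω : A →ₗ[K] A) (δ₁ δ₂ Δ : A →ₗ[K] A ⊗[K] A) : Prop :=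
  (∀ a, TensorProduct.map ψ ψ (Δ a) = Δ (ψ a)) ∧
  (∀ a, TensorProduct.map ω ω (Δ a) = Δ (ω a)) ∧
  (∀ a, TensorProduct.map α α (Δ a) = Δ (α a)) ∧
  (∀ a, TensorProduct.map β β (Δ a) = Δ (β a)) ∧
  -- BiHom-coassociativity: (Δ⊗ψ)∘Δ = (ω⊗Δ)∘Δ
  (∀ a, TensorProduct.assoc K A A A (TensorProduct.map Δ ψ (Δ a)) =
    TensorProduct.map ω Δ (Δ a)) ∧
  -- δ₁ is a BiHom-derivation
  (∀ a, TensorProduct.map α α (δ₁ a) = δ₁ (α a)) ∧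
  (∀ a, TensorProduct.map β β (δ₁ a) = δ₁ (β a)) ∧
  (∀ a, TensorProduct.map ψ ψ (δ₁ a) = δ₁ (ψ a)) ∧
  (∀ a, TensorProduct.map ω ω (δ₁ a) = δ₁ (ω a)) ∧
  (∀ a b, δ₁ (a * b) = lT2 β ω a (δ₁ b) + rT2 α ψ b (δ₁ a)) ∧
  -- δ₂ is a BiHom-derivation
  (∀ a, TensorProduct.map α α (δ₂ a) = δ₂ (α a)) ∧
  (∀ a, TensorProduct.map β β (δ₂ a) = δ₂ (β a)) ∧
  (∀ a, TensorProduct.map ψ ψ (δ₂ a) = δ₂ (ψ a)) ∧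
  (∀ a, TensorProduct.map ω ω (δ₂ a) = δ₂ (ω a)) ∧
  (∀ a b, δ₂ (a * b) = lT2 β ω a (δ₂ b) + rT2 α ψ b (δ₂ a)) ∧
  -- Δ is a covariant BiHom-derivation with respect to (δ₁, δ₂)
  (∀ a b, Δ (a * b) = rT2 α ψ b (Δ a) + lT2 β ω a (δ₁ b)) ∧
  (∀ a b, Δ (a * b) = lT2 β ω a (Δ b) + rT2 α ψ b (δ₂ a))

set_option linter.unusedSimpArgs false
set_option linter.unusedSectionVars false

section Helpers

variable {K A : Type*} [Field K] [NonUnitalNonAssocRing A] [Module K A]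
    [SMulCommClass K A A] [IsScalarTower K A A]

theorem deltaOp_eq (α β : A ≃ₗ[K] A) (ψ ω : A →ₗ[K] A) (r s : A ⊗[K] A) :
    deltaOp α β ψ ω r s =
      (lT2hom β.toLinearMap ω).flip r ∘ₗ α.symm.toLinearMap -
      (rT2hom α.toLinearMap ψ).flip s ∘ₗ β.symm.toLinearMap := rfl

theorem lT2hom_eq (β ω : A →ₗ[K] A) (a : A) : lT2hom β ω a = lT2 β ω a := by
  ext x y
  simp [lT2hom, lT2]

theorem rT2hom_eq (α ψ : A →ₗ[K] A) (a : A) : rT2hom α ψ a = rT2 α ψ a := by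
  ext x y
  simp [rT2hom, rT2]

theorem deltaOp_apply (α β : A ≃ₗ[K] A) (ψ ω : A →ₗ[K] A) (r s : A ⊗[K] A) (a : A) :
    deltaOp α β ψ ω r s a =
      lT2 β.toLinearMap ω (α.symm a) r - rT2 α.toLinearMap ψ (β.symm a) s := by
  simp [deltaOp_eq, lT2hom_eq, rT2hom_eq]

theorem pure_ind {M : Type*} [AddCommGroup M] [Module K M] (P Q : A ⊗[K] A →ₗ[K] M)
    (h : ∀ x y, P (x ⊗ₜ y) = Q (x ⊗ₜ y)) (t : A ⊗[K] A) : P t = Q t := by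
  have : P = Q := by
    ext x y
    exact h x y
  rw [this]

theorem my_sub_left (f g : A →ₗ[K] A ⊗[K] A) (h : A →ₗ[K] A) :
    TensorProduct.map (f - g) h = TensorProduct.map f h - TensorProduct.map g h := by
  ext x y
  simp [TensorProduct.sub_tmul]

theorem my_sub_right (f g : A →ₗ[K] A ⊗[K] A) (h : A →ₗ[K] A) :
    TensorProduct.map h (f - g) = TensorProduct.map h f - TensorProduct.map h g := by
  ext x y
  simp [TensorProduct.tmul_sub]

end Helpers

/-- Proposition 2.24 / Proposition 2.11 of the paper: with the
data of Statement 11, `(A, μ, δ_r, δ_s, Δ, α, β, ψ, ω)` is a covariant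
BiHom-bialgebra if and only if, for all `a ∈ A`,
`ωα⁻¹(a)▷(r₁₃r₁₂ − r₁₂r₂₃ + s₂₃r₁₃) = (s₁₃r₁₂ − s₁₂s₂₃ + s₂₃s₁₃)◁ψβ⁻¹(a)`. -/
theorem stmt12 {K A : Type*} [Field K] [NonUnitalNonAssocRing A] [Module K A]
    [SMulCommClass K A A] [IsScalarTower K A A]
    (α β : A ≃ₗ[K] A) (ψ ω : A →ₗ[K] A) (r s : A ⊗[K] A)
    -- BiHom-associative algebra axioms for (A, ·, α, β)
    (hαmul : ∀ a b, α (a * b) = α a * α b)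
    (hβmul : ∀ a b, β (a * b) = β a * β b)
    (hassoc : ∀ a b c, α a * (b * c) = (a * b) * β c)
    -- ψ, ω multiplicative
    (hψmul : ∀ a b, ψ (a * b) = ψ a * ψ b)
    (hωmul : ∀ a b, ω (a * b) = ω a * ω b)
    -- α, β, ψ, ω pairwise commute
    (hαβ : ∀ a, α (β a) = β (α a)) (hαψ : ∀ a, α (ψ a) = ψ (α a))
    (hαω : ∀ a, α (ω a) = ω (α a)) (hβψ : ∀ a, β (ψ a) = ψ (β a))
    (hβω : ∀ a, β (ω a) = ω (β a)) (hψω : ∀ a, ψ (ω a) = ω (ψ a))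
    -- r, s are α-, β-, ψ-, ω-invariant
    (hrα : TensorProduct.map α.toLinearMap α.toLinearMap r = r)
    (hrβ : TensorProduct.map β.toLinearMap β.toLinearMap r = r)
    (hrψ : TensorProduct.map ψ ψ r = r)
    (hrω : TensorProduct.map ω ω r = r)
    (hsα : TensorProduct.map α.toLinearMap α.toLinearMap s = s)
    (hsβ : TensorProduct.map β.toLinearMap β.toLinearMap s = s)
    (hsψ : TensorProduct.map ψ ψ s = s)
    (hsω : TensorProduct.map ω ω s = s) :
    IsCovariantBiHomBialgebra α.toLinearMap β.toLinearMap ψ ω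
      (deltaOp α β ψ ω r r) (deltaOp α β ψ ω s s) (deltaOp α β ψ ω r s) ↔
    (∀ a, lT3 β.toLinearMap ω (ω (α.symm a))
        (m1312 α.toLinearMap β.toLinearMap ψ ω (r ⊗ₜ[K] r)
          - m1223 α.toLinearMap β.toLinearMap (r ⊗ₜ[K] r)
          + m2313 α.toLinearMap β.toLinearMap ψ ω (s ⊗ₜ[K] r)) =
      rT3 α.toLinearMap ψ (ψ (β.symm a))
        (m1312 α.toLinearMap β.toLinearMap ψ ω (s ⊗ₜ[K] r)
          - m1223 α.toLinearMap β.toLinearMap (s ⊗ₜ[K] s)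
          + m2313 α.toLinearMap β.toLinearMap ψ ω (s ⊗ₜ[K] s))) := by
  have iαψ : ∀ a, α.symm (ψ a) = ψ (α.symm a) := fun a => by
    rw [LinearEquiv.symm_apply_eq, hαψ, LinearEquiv.apply_symm_apply]
  have iαω : ∀ a, α.symm (ω a) = ω (α.symm a) := fun a => by
    rw [LinearEquiv.symm_apply_eq, hαω, LinearEquiv.apply_symm_apply]
  have iβψ : ∀ a, β.symm (ψ a) = ψ (β.symm a) := fun a => by
    rw [LinearEquiv.symm_apply_eq, hβψ, LinearEquiv.apply_symm_apply]
  have iβω : ∀ a, β.symm (ω a) = ω (β.symm a) := fun a => by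
    rw [LinearEquiv.symm_apply_eq, hβω, LinearEquiv.apply_symm_apply]
  have iαβ : ∀ a, α.symm (β a) = β (α.symm a) := fun a => by
    rw [LinearEquiv.symm_apply_eq, hαβ, LinearEquiv.apply_symm_apply]
  have jαβ : ∀ a, α (β.symm a) = β.symm (α a) := fun a => by
    rw [LinearEquiv.eq_symm_apply, ← hαβ, LinearEquiv.apply_symm_apply]
  have kαβ : ∀ a, α.symm (β.symm a) = β.symm (α.symm a) := fun a => by
    rw [LinearEquiv.eq_symm_apply, ← iαβ, LinearEquiv.apply_symm_apply]
  have iαm : ∀ a b, α.symm (a * b) = α.symm a * α.symm b := fun a b => by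
    rw [LinearEquiv.symm_apply_eq, hαmul, LinearEquiv.apply_symm_apply,
      LinearEquiv.apply_symm_apply]
  have iβm : ∀ a b, β.symm (a * b) = β.symm a * β.symm b := fun a b => by
    rw [LinearEquiv.symm_apply_eq, hβmul, LinearEquiv.apply_symm_apply,
      LinearEquiv.apply_symm_apply]
  have as' : ∀ a b c, a * b * c = α a * (b * β.symm c) := fun a b c => by
    rw [hassoc, LinearEquiv.apply_symm_apply]
  have comp : ∀ f : A →ₗ[K] A, (∀ x y, f (x * y) = f x * f y) → (∀ x, f (α x) = α (f x)) →
      (∀ x, f (β x) = β (f x)) → (∀ x, f (ψ x) = ψ (f x)) → (∀ x, f (ω x) = ω (f x)) →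
      ∀ u v : A ⊗[K] A, TensorProduct.map f f u = u → TensorProduct.map f f v = v →
      ∀ a, TensorProduct.map f f (deltaOp α β ψ ω u v a) = deltaOp α β ψ ω u v (f a) := by
    intro f hm fα fβ fψ fω u v hu hv a
    have gα : ∀ x, f (α.symm x) = α.symm (f x) := fun x => by
      rw [LinearEquiv.eq_symm_apply, ← fα, LinearEquiv.apply_symm_apply]
    have gβ : ∀ x, f (β.symm x) = β.symm (f x) := fun x => by
      rw [LinearEquiv.eq_symm_apply, ← fβ, LinearEquiv.apply_symm_apply]
    have h1 : TensorProduct.map f f (lT2 β.toLinearMap ω (α.symm a) u) =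
        lT2 β.toLinearMap ω (α.symm (f a)) (TensorProduct.map f f u) := by
      refine pure_ind (TensorProduct.map f f ∘ₗ lT2 β.toLinearMap ω (α.symm a))
        (lT2 β.toLinearMap ω (α.symm (f a)) ∘ₗ TensorProduct.map f f) (fun x y => ?_) u
      simp [lT2, hm, fβ, fω, gα]
    have h2 : TensorProduct.map f f (rT2 α.toLinearMap ψ (β.symm a) v) =
        rT2 α.toLinearMap ψ (β.symm (f a)) (TensorProduct.map f f v) := by
      refine pure_ind (TensorProduct.map f f ∘ₗ rT2 α.toLinearMap ψ (β.symm a))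
        (rT2 α.toLinearMap ψ (β.symm (f a)) ∘ₗ TensorProduct.map f f) (fun x y => ?_) v
      simp [rT2, hm, fα, fψ, gβ]
    rw [deltaOp_apply, deltaOp_apply, map_sub, h1, h2, hu, hv]
  have cα := comp α.toLinearMap hαmul (fun _ => rfl) hαβ hαψ hαω
  have cβ := comp β.toLinearMap hβmul (fun x => (hαβ x).symm) (fun _ => rfl) hβψ hβω
  have cψ := comp ψ hψmul (fun x => (hαψ x).symm) (fun x => (hβψ x).symm) (fun _ => rfl) hψω
  have cω := comp ω hωmul (fun x => (hαω x).symm) (fun x => (hβω x).symm)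
    (fun x => (hψω x).symm) (fun _ => rfl)
  have LL : ∀ (a b : A) (t : A ⊗[K] A), lT2 β.toLinearMap ω a (lT2 β.toLinearMap ω (α.symm b) t) =
      lT2 β.toLinearMap ω (α.symm (a * b)) (TensorProduct.map β.toLinearMap β.toLinearMap t) := fun a b t => by
    refine pure_ind (lT2 β.toLinearMap ω a ∘ₗ lT2 β.toLinearMap ω (α.symm b))
      (lT2 β.toLinearMap ω (α.symm (a * b)) ∘ₗ TensorProduct.map β.toLinearMap β.toLinearMap) (fun x y => ?_) t
    simp [lT2, hαmul, hβmul, hψmul, hωmul, hαβ, hαψ, hαω, hβψ, hβω, hψω, iαψ, iαω, iβψ, iβω, iαβ, jαβ, kαβ, iαm, iβm, as']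
  have RR : ∀ (a b : A) (t : A ⊗[K] A), rT2 α.toLinearMap ψ b (rT2 α.toLinearMap ψ (β.symm a) t) =
      rT2 α.toLinearMap ψ (β.symm (a * b)) (TensorProduct.map α.toLinearMap α.toLinearMap t) := fun a b t => by
    refine pure_ind (rT2 α.toLinearMap ψ b ∘ₗ rT2 α.toLinearMap ψ (β.symm a))
      (rT2 α.toLinearMap ψ (β.symm (a * b)) ∘ₗ TensorProduct.map α.toLinearMap α.toLinearMap) (fun x y => ?_) t
    simp [rT2, hαmul, hβmul, hψmul, hωmul, hαβ, hαψ, hαω, hβψ, hβω, hψω, iαψ, iαω, iβψ, iβω, iαβ, jαβ, kαβ, iαm, iβm, as']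
  have LR : ∀ (a b : A) (t : A ⊗[K] A), lT2 β.toLinearMap ω a (rT2 α.toLinearMap ψ (β.symm b) t) =
      rT2 α.toLinearMap ψ b (lT2 β.toLinearMap ω (α.symm a) t) := fun a b t => by
    refine pure_ind (lT2 β.toLinearMap ω a ∘ₗ rT2 α.toLinearMap ψ (β.symm b))
      (rT2 α.toLinearMap ψ b ∘ₗ lT2 β.toLinearMap ω (α.symm a)) (fun x y => ?_) t
    simp [lT2, rT2, hαmul, hβmul, hψmul, hωmul, hαβ, hαψ, hαω, hβψ, hβω, hψω, iαψ, iαω, iβψ, iβω, iαβ, jαβ, kαβ, iαm, iβm, as']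
  have facts : ∀ (a : A) (u v : A ⊗[K] A),
      TensorProduct.assoc K A A A (TensorProduct.map ((lT2hom β.toLinearMap ω).flip (TensorProduct.map β.toLinearMap β.toLinearMap v) ∘ₗ α.symm.toLinearMap) ψ (lT2 β.toLinearMap ω (α.symm a) (TensorProduct.map α.toLinearMap α.toLinearMap u))) =
        lT3 β.toLinearMap ω (ω (α.symm a)) (m1312 α.toLinearMap β.toLinearMap ψ ω (u ⊗ₜ[K] v)) ∧
      TensorProduct.assoc K A A A (TensorProduct.map ((lT2hom β.toLinearMap ω).flip (TensorProduct.map α.toLinearMap α.toLinearMap v) ∘ₗ α.symm.toLinearMap) ψ (rT2 α.toLinearMap ψ (β.symm a) (TensorProduct.map α.toLinearMap α.toLinearMap u))) =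
        rT3 α.toLinearMap ψ (ψ (β.symm a)) (m1312 α.toLinearMap β.toLinearMap ψ ω (u ⊗ₜ[K] v)) ∧
      TensorProduct.assoc K A A A (TensorProduct.map ((rT2hom α.toLinearMap ψ).flip (TensorProduct.map α.toLinearMap α.toLinearMap v) ∘ₗ β.symm.toLinearMap) ψ (rT2 α.toLinearMap ψ (β.symm a) (TensorProduct.map β.toLinearMap β.toLinearMap u))) =
        rT3 α.toLinearMap ψ (ψ (β.symm a)) (m1223 α.toLinearMap β.toLinearMap (v ⊗ₜ[K] (TensorProduct.map ψ ψ u))) ∧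
      TensorProduct.map ω ((lT2hom β.toLinearMap ω).flip (TensorProduct.map β.toLinearMap β.toLinearMap v) ∘ₗ α.symm.toLinearMap) (lT2 β.toLinearMap ω (α.symm a) (TensorProduct.map α.toLinearMap α.toLinearMap u)) =
        lT3 β.toLinearMap ω (ω (α.symm a)) (m1223 α.toLinearMap β.toLinearMap ((TensorProduct.map ω ω u) ⊗ₜ[K] v)) ∧
      TensorProduct.map ω ((rT2hom α.toLinearMap ψ).flip (TensorProduct.map β.toLinearMap β.toLinearMap v) ∘ₗ β.symm.toLinearMap) (lT2 β.toLinearMap ω (α.symm a) (TensorProduct.map β.toLinearMap β.toLinearMap u)) =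
        lT3 β.toLinearMap ω (ω (α.symm a)) (m2313 α.toLinearMap β.toLinearMap ψ ω (v ⊗ₜ[K] u)) ∧
      TensorProduct.map ω ((rT2hom α.toLinearMap ψ).flip (TensorProduct.map α.toLinearMap α.toLinearMap v) ∘ₗ β.symm.toLinearMap) (rT2 α.toLinearMap ψ (β.symm a) (TensorProduct.map β.toLinearMap β.toLinearMap u)) =
        rT3 α.toLinearMap ψ (ψ (β.symm a)) (m2313 α.toLinearMap β.toLinearMap ψ ω (v ⊗ₜ[K] u)) ∧
      TensorProduct.assoc K A A A (TensorProduct.map ((rT2hom α.toLinearMap ψ).flip (TensorProduct.map α.toLinearMap α.toLinearMap (TensorProduct.map ω ω v)) ∘ₗ β.symm.toLinearMap) ψ (lT2 β.toLinearMap ω (α.symm a) (TensorProduct.map β.toLinearMap β.toLinearMap u))) =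
        TensorProduct.map ω ((lT2hom β.toLinearMap ω).flip (TensorProduct.map β.toLinearMap β.toLinearMap (TensorProduct.map ψ ψ u)) ∘ₗ α.symm.toLinearMap) (rT2 α.toLinearMap ψ (β.symm a) (TensorProduct.map α.toLinearMap α.toLinearMap v)) := by
    intro a u v
    refine ⟨?_, ?_, ?_, ?_, ?_, ?_, ?_⟩ <;>
    induction u using TensorProduct.induction_on with
    | zero => simp
    | add x y hx hy =>
      simp only [map_add, TensorProduct.add_tmul, TensorProduct.tmul_add, LinearMap.add_comp,
        TensorProduct.map_add_left, TensorProduct.map_add_right, LinearMap.add_apply] at hx hy ⊢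
      rw [hx, hy]
    | tmul x y =>
      induction v using TensorProduct.induction_on with
      | zero => simp
      | add x y hx hy =>
        simp only [map_add, TensorProduct.add_tmul, TensorProduct.tmul_add, LinearMap.add_comp,
          TensorProduct.map_add_left, TensorProduct.map_add_right, LinearMap.add_apply] at hx hy ⊢
        rw [hx, hy]
      | tmul z w =>
        simp [lT2, rT2, lT3, rT3, lT2hom_eq, rT2hom_eq, m1312, m1223, m2313, hαmul, hβmul, hψmul, hωmul, hαβ, hαψ, hαω, hβψ, hβω, hψω, iαψ, iαω, iβψ, iβω, iαβ, jαβ, kαβ, iαm, iβm, as']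
  have frr := fun a => facts a r r
  have fsr := fun a => facts a s r
  have frs := fun a => facts a r s
  have fss := fun a => facts a s s
  simp only [hrα, hrβ, hrψ, hrω, hsα, hsβ, hsψ, hsω] at frr fsr frs fss
  have key : ∀ a, TensorProduct.assoc K A A A
      (TensorProduct.map (deltaOp α β ψ ω r s) ψ (deltaOp α β ψ ω r s a)) -
      TensorProduct.map ω (deltaOp α β ψ ω r s) (deltaOp α β ψ ω r s a) =
    (lT3 β.toLinearMap ω (ω (α.symm a))
        (m1312 α.toLinearMap β.toLinearMap ψ ω (r ⊗ₜ[K] r)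
          - m1223 α.toLinearMap β.toLinearMap (r ⊗ₜ[K] r)
          + m2313 α.toLinearMap β.toLinearMap ψ ω (s ⊗ₜ[K] r))) - (      rT3 α.toLinearMap ψ (ψ (β.symm a))
        (m1312 α.toLinearMap β.toLinearMap ψ ω (s ⊗ₜ[K] r)
          - m1223 α.toLinearMap β.toLinearMap (s ⊗ₜ[K] s)
          + m2313 α.toLinearMap β.toLinearMap ψ ω (s ⊗ₜ[K] s))) := fun a => by
    rw [deltaOp_apply, deltaOp_eq]
    simp only [map_sub, map_add, my_sub_left, my_sub_right,
      LinearMap.sub_apply]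
    rw [(frr a).1, (fsr a).2.1, (fss a).2.2.1, (frr a).2.2.2.1, (frs a).2.2.2.2.1, (fss a).2.2.2.2.2.1, (frs a).2.2.2.2.2.2]
    abel
  constructor
  · rintro ⟨-, -, -, -, h, -⟩ a
    rw [← sub_eq_zero, ← key a, sub_eq_zero]
    exact h a
  · intro h
    refine ⟨cψ r s hrψ hsψ, cω r s hrω hsω, cα r s hrα hsα, cβ r s hrβ hsβ, fun a => ?_,
      cα r r hrα hrα, cβ r r hrβ hrβ, cψ r r hrψ hrψ, cω r r hrω hrω, ?_,
      cα s s hsα hsα, cβ s s hsβ hsβ, cψ s s hsψ hsψ, cω s s hsω hsω, ?_, ?_, ?_⟩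
    · rw [← sub_eq_zero, key a, sub_eq_zero]
      exact h a
    all_goals
      intros
      simp only [deltaOp_apply, map_sub, LL, RR, LR, hrα, hrβ, hsα, hsβ]
      abel
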